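/- Let α, β > −1 and b^{(i,j)} := (a_{α+i,β+j,−1/2} / a_{α,β,−1/2})^{1/2}. For x = cos θ, y = cos φ (θ, φ ∈ [0,π]) write s := cos(θ−φ) and t := cos(θ+φ). Then for every n ≥ 0, the following 2n+1 functions of (x,y) ∈ [−1,1]² (each of which is a polynomial in (x,y)) form an orthonormal basis of V_{2n}(𝒲_{α,β,−1/2}): (1/√2)[p_n^{(α,β)}(s) p_k^{(α,β)}(t) + p_k^{(α,β)}(s) p_n^{(α,β)}(t)] for 0 ≤ k < n; p_n^{(α,β)}(s) p_n^{(α,β)}(t); b^{(1,1)} (1/√2) (x²−y²)[p_{n−1}^{(α+1,β+1)}(s) p_k^{(α+1,β+1)}(t) + p_k^{(α+1,β+1)}(s) p_{n−1}^{(α+1,β+1)}(t)] for 0 ≤ k < n−1; and b^{(1,1)} (x²−y²) p_{n−1}^{(α+1,β+1)}(s) p_{n−1}^{(α+1,β+1)}(t). Likewise, the following 2n+2 functions form an orthonormal basis of V_{2n+1}(𝒲_{α,β,−1/2}): b^{(0,1)} (1/√2) (x+y)[p_n^{(α,β+1)}(s) p_k^{(α,β+1)}(t) + p_k^{(α,β+1)}(s)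 p_n^{(α,β+1)}(t)] for 0 ≤ k < n; b^{(0,1)} (x+y) p_n^{(α,β+1)}(s) p_n^{(α,β+1)}(t); b^{(1,0)} (1/√2) (x−y)[p_n^{(α+1,β)}(s) p_k^{(α+1,β)}(t) + p_k^{(α+1,β)}(s) p_n^{(α+1,β)}(t)] for 0 ≤ k < n; and b^{(1,0)} (x−y) p_n^{(α+1,β)}(s) p_n^{(α+1,β)}(t). -/

import Mathlib

open MeasureTheory Real Set Filter
open scoped ENNReal

noncomputable section

/-- The parabolic-type domain `Ω`, the image of the triangle `-1 < x < y < 1`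
under `(x, y) ↦ (x + y, x y)`. -/
def omegaDom : Set (ℝ × ℝ) :=
  {q | ∃ x y : ℝ, -1 < x ∧ x < y ∧ y < 1 ∧ q = (x + y, x * y)}

/-- The square `[-1,1]²`. -/
def sqDom : Set (ℝ × ℝ) := Icc (-1 : ℝ) 1 ×ˢ Icc (-1 : ℝ) 1

/-- The open triangle `-1 < x < y < 1`. -/
def triDom : Set (ℝ × ℝ) := {q | -1 < q.1 ∧ q.1 < q.2 ∧ q.2 < 1}

/-- The smaller root `x(u,v)` of `t² - u t + v = 0`. -/
def xRoot (q : ℝ × ℝ) : ℝ := (q.1 - Real.sqrt (q.1 ^ 2 - 4 * q.2)) / 2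

/-- The larger root `y(u,v)` of `t² - u t + v = 0`. -/
def yRoot (q : ℝ × ℝ) : ℝ := (q.1 + Real.sqrt (q.1 ^ 2 - 4 * q.2)) / 2

/-- Evaluation of a two-variable polynomial at a point of `ℝ²`. -/
def evalP (P : MvPolynomial (Fin 2) ℝ) (q : ℝ × ℝ) : ℝ :=
  MvPolynomial.eval ![q.1, q.2] P

/-- The space `V_n(W)` of orthogonal polynomials of degree `n` for the weight `W`
on the domain `D`: polynomials of exact total degree `n` orthogonal to all
polynomials of lower degree. -/
def Vpoly (D : Set (ℝ × ℝ)) (W : ℝ × ℝ → ℝ) (n : ℕ) : Set (MvPolynomial (Fin 2) ℝ) :=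
  {P | P.totalDegree = n ∧ ∀ Q : MvPolynomial (Fin 2) ℝ, Q.totalDegree < n →
    (∫ q in D, evalP P q * evalP Q q * W q) = 0}

/-- `Q 0, …, Q n` is an orthonormal basis of `V_n(W)` on `D`. -/
def isONBVn (D : Set (ℝ × ℝ)) (W : ℝ × ℝ → ℝ) (n : ℕ)
    (Q : ℕ → MvPolynomial (Fin 2) ℝ) : Prop :=
  (∀ k, k ≤ n → Q k ∈ Vpoly D W n) ∧
  (∀ k, k ≤ n → ∀ j, j ≤ n →
    (∫ q in D, evalP (Q k) q * evalP (Q j) q * W q) = if k = j then 1 else 0) ∧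
  (∀ R ∈ Vpoly D W n, R ∈ Submodule.span ℝ (Q '' Set.Iic n))

/-- `K` is the reproducing kernel of `Π_n²` in `L²(W)` on the domain `D`:
it is a polynomial function, for each fixed `x ∈ D` it is a polynomial of total
degree `≤ n` in the second variable, and it reproduces every polynomial of total
degree `≤ n`. -/
def IsRK (D : Set (ℝ × ℝ)) (W : ℝ × ℝ → ℝ) (n : ℕ) (K : ℝ × ℝ → ℝ × ℝ → ℝ) : Prop :=
  (∃ KP : MvPolynomial (Fin 4) ℝ,
    ∀ x y : ℝ × ℝ, K x y = MvPolynomial.eval ![x.1, x.2, y.1, y.2] KP) ∧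
  (∀ x ∈ D, ∃ P : MvPolynomial (Fin 2) ℝ, P.totalDegree ≤ n ∧ ∀ y, K x y = evalP P y) ∧
  (∀ P : MvPolynomial (Fin 2) ℝ, P.totalDegree ≤ n →
    ∀ x ∈ D, (∫ y in D, K x y * evalP P y * W y) = evalP P x)

/-- `p` is the sequence of orthonormal polynomials with respect to the weight `w`
on `[-1,1]`: `p n` has degree exactly `n`, positive leading coefficient, and the
`p n` are orthonormal in `L²(w)`. -/
def IsONPS (w : ℝ → ℝ) (p : ℕ → Polynomial ℝ) : Prop :=
  (∀ n, (p n).natDegree = n) ∧ (∀ n, 0 < (p n).leadingCoeff) ∧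
  (∀ n m, (∫ x in Icc (-1:ℝ) 1, (p n).eval x * (p m).eval x * w x)
    = if n = m then 1 else 0)

/-- The Christoffel–Darboux kernel `k_n(x,y) = ∑_{j=0}^n p_j(x) p_j(y)`. -/
def CDK (p : ℕ → Polynomial ℝ) (n : ℕ) (x y : ℝ) : ℝ :=
  ∑ j ∈ Finset.range (n + 1), (p j).eval x * (p j).eval y

/-- The Jacobi factor `J_{a,b}(x) = (1-x)^a (1+x)^b`. -/
def Jw (a b : ℝ) (x : ℝ) : ℝ := (1 - x) ^ a * (1 + x) ^ b

/-- The factor `J*_{a,b}(u,v) = (1-u+v)^a (1+u+v)^b` on `Ω`. -/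
def JstarW (a b : ℝ) (q : ℝ × ℝ) : ℝ := (1 - q.1 + q.2) ^ a * (1 + q.1 + q.2) ^ b

/-- Modulus of continuity of `ψ` on `[-1,1]`. -/
def modCont (ψ : ℝ → ℝ) (t : ℝ) : ℝ :=
  sSup {d : ℝ | ∃ x ∈ Icc (-1:ℝ) 1, ∃ y ∈ Icc (-1:ℝ) 1, |x - y| ≤ t ∧ d = |ψ x - ψ y|}

/-- The generalized Jacobi class `GJ`. -/
def IsGJ (w : ℝ → ℝ) : Prop :=
  ∃ (r : ℕ) (ψ : ℝ → ℝ) (γ₀ γ₁ : ℝ) (γs xs : Fin r → ℝ),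
    -1 < γ₀ ∧ -1 < γ₁ ∧ (∀ i, -1 < γs i) ∧
    StrictMono xs ∧ (∀ i, xs i ∈ Ioo (-1:ℝ) 1) ∧
    ContinuousOn ψ (Icc (-1:ℝ) 1) ∧ (∀ x ∈ Icc (-1:ℝ) 1, 0 < ψ x) ∧
    IntegrableOn (fun t => modCont ψ t / t) (Ioc (0:ℝ) 1) ∧
    (∀ x : ℝ, |x| ≤ 1 → w x = ψ x * (1 - x) ^ γ₀ * (1 + x) ^ γ₁ * ∏ i, |x - xs i| ^ γs i) ∧
    (∀ x : ℝ, 1 < |x| → w x = 0)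

/-- The `L^p`-norm `‖f‖_{w,e}` on `[-1,1]` (as an extended nonnegative real). -/
def lpnormI (w : ℝ → ℝ) (e : ℝ) (f : ℝ → ℝ) : ℝ≥0∞ :=
  (∫⁻ x in Icc (-1:ℝ) 1, ENNReal.ofReal (|f x| ^ e * w x)) ^ (1 / e)

/-- The `L^p`-norm `‖f‖_{W,e}` on a planar domain `D` (as an extended nonnegative real). -/
def lpnormD (D : Set (ℝ × ℝ)) (W : ℝ × ℝ → ℝ) (e : ℝ) (f : ℝ × ℝ → ℝ) : ℝ≥0∞ :=
  (∫⁻ q in D, ENNReal.ofReal (|f q| ^ e * W q)) ^ (1 / e)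

/-- The operator `s_n^{i,j}(w; f, x)` built from the Christoffel–Darboux kernel of the
orthonormal polynomials `pij` of the weight `J_{i,j} w`. -/
def snOp (w : ℝ → ℝ) (pij : ℕ → Polynomial ℝ) (i j : ℝ) (n : ℕ) (f : ℝ → ℝ) (x : ℝ) : ℝ :=
  Jw (i/2) (j/2) x * ∫ y in Icc (-1:ℝ) 1, f y * CDK pij n x y * Jw (i/2) (j/2) y * w y

/-- Substitution `(x, y) ↦ (2 x y, x² + y² - 1)` on two-variable polynomials. -/
def quadSub (P : MvPolynomial (Fin 2) ℝ) : MvPolynomial (Fin 2) ℝ :=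
  MvPolynomial.aeval
    ![2 * MvPolynomial.X 0 * MvPolynomial.X 1,
      MvPolynomial.X 0 ^ 2 + MvPolynomial.X 1 ^ 2 - 1] P

/-- A one-variable polynomial viewed as a polynomial in the first variable. -/
def polyX (q : Polynomial ℝ) : MvPolynomial (Fin 2) ℝ :=
  Polynomial.aeval (MvPolynomial.X 0) q

/-- A one-variable polynomial viewed as a polynomial in the second variable. -/
def polyY (q : Polynomial ℝ) : MvPolynomial (Fin 2) ℝ :=
  Polynomial.aeval (MvPolynomial.X 1) q


section LinAlg

open MvPolynomial

lemma Q8_mem_span_monos (N : ℕ) (R : MvPolynomial (Fin 2) ℝ) (hR : R.totalDegree ≤ N) :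
    R ∈ Submodule.span ℝ (Set.range (fun i : (Σ M : Fin (N+1), Fin (M.1+1)) =>
      (X 0 ^ (i.2.1) * X 1 ^ (i.1.1 - i.2.1) : MvPolynomial (Fin 2) ℝ))) := by
  rw [R.as_sum]
  refine Submodule.sum_mem _ fun s hs => ?_
  have h1 : s 0 + s 1 ≤ N := by
    have := MvPolynomial.le_totalDegree hs
    rw [Finsupp.sum_fintype _ _ (by simp)] at this
    simp only [Fin.sum_univ_two] at this
    omega
  have h2 : (monomial s (coeff s R) : MvPolynomial (Fin 2) ℝ)
      = (coeff s R) • (X 0 ^ (s 0) * X 1 ^ (s 1)) := by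
    rw [MvPolynomial.monomial_eq, Finsupp.prod_fintype _ _ (by simp), Fin.prod_univ_two,
      MvPolynomial.smul_eq_C_mul]
  rw [h2]
  refine Submodule.smul_mem _ _ (Submodule.subset_span ?_)
  refine ⟨⟨⟨s 0 + s 1, by omega⟩, ⟨s 0, by simp⟩⟩, ?_⟩
  simp

lemma Q8_expand (L : MvPolynomial (Fin 2) ℝ →ₗ[ℝ] ℝ)
    (Q : ℕ → ℕ → MvPolynomial (Fin 2) ℝ)
    (hdeg : ∀ N k, k ≤ N → (Q N k).totalDegree ≤ N)
    (horth : ∀ N k M l, k ≤ N → l ≤ M → L (Q N k * Q M l) = if N = M ∧ k = l then 1 else 0)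
    (N : ℕ) (R : MvPolynomial (Fin 2) ℝ) (hR : R.totalDegree ≤ N) :
    R = ∑ i : (Σ M : Fin (N+1), Fin (M.1+1)), L (R * Q i.1 i.2) • Q i.1 i.2 := by
  classical
  set v : (Σ M : Fin (N+1), Fin (M.1+1)) → MvPolynomial (Fin 2) ℝ := fun i => Q i.1 i.2 with hv
  have ho : ∀ i j, L (v i * v j) = if i = j then 1 else 0 := by
    rintro ⟨⟨M, hM⟩, ⟨k, hk⟩⟩ ⟨⟨M', hM'⟩, ⟨k', hk'⟩⟩
    simp only [hv]
    simp only at hk hk'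
    rw [horth _ _ _ _ (by omega) (by omega)]
    congr 1
    simp only [eq_iff_iff, Sigma.mk.injEq, Fin.mk.injEq]
    constructor
    · rintro ⟨rfl, rfl⟩; simp
    · rintro ⟨rfl, h⟩; simpa using h
  have hsum : ∀ (c : (Σ M : Fin (N+1), Fin (M.1+1)) → ℝ) j, L ((∑ i, c i • v i) * v j) = c j := by
    intro c j
    rw [Finset.sum_mul, map_sum]
    simp [ho]
  have hli : LinearIndependent ℝ v := by
    rw [Fintype.linearIndependent_iff]
    intro g hg i
    rw [← hsum g i, hg]; simp
  let m := (fun i : (Σ M : Fin (N+1), Fin (M.1+1)) =>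
      (X 0 ^ (i.2.1) * X 1 ^ (i.1.1 - i.2.1) : MvPolynomial (Fin 2) ℝ))
  have hle : Submodule.span ℝ (Set.range v) ≤ Submodule.span ℝ (Set.range m) := by
    rw [Submodule.span_le]
    rintro _ ⟨i, rfl⟩
    exact Q8_mem_span_monos N _ ((hdeg _ _ (by omega)).trans (by omega))
  have : FiniteDimensional ℝ (Submodule.span ℝ (Set.range m)) :=
    FiniteDimensional.span_of_finite ℝ (Set.finite_range m)
  have heq := Submodule.eq_of_le_of_finrank_le hle (by
    rw [finrank_span_eq_card hli]
    exact finrank_range_le_card m)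
  have hmem : R ∈ Submodule.span ℝ (Set.range v) := by
    rw [heq]; exact Q8_mem_span_monos N R hR
  obtain ⟨c, hc⟩ := (Submodule.mem_span_range_iff_exists_fun ℝ).1 hmem
  conv_lhs => rw [← hc]
  refine Finset.sum_congr rfl fun i _ => ?_
  have := hsum c i
  rw [hc] at this
  change c i • v i = L (R * v i) • v i
  rw [this]

lemma Q8_onb (W : ℝ × ℝ → ℝ) (D : Set (ℝ × ℝ))
    (L : MvPolynomial (Fin 2) ℝ →ₗ[ℝ] ℝ)
    (hL : ∀ P Q : MvPolynomial (Fin 2) ℝ, L (P * Q) = ∫ q in D, evalP P q * evalP Q q * W q)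
    (Q : ℕ → ℕ → MvPolynomial (Fin 2) ℝ)
    (hdeg : ∀ N k, k ≤ N → (Q N k).totalDegree ≤ N)
    (horth : ∀ N k M l, k ≤ N → l ≤ M → L (Q N k * Q M l) = if N = M ∧ k = l then 1 else 0)
    (N : ℕ) : isONBVn D W N (Q N) := by
  have hlow : ∀ k, k ≤ N → ∀ R : MvPolynomial (Fin 2) ℝ, R.totalDegree < N →
      L (Q N k * R) = 0 := by
    intro k hk R hR
    rw [Q8_expand L Q hdeg horth (N-1) R (by omega), Finset.mul_sum, map_sum]
    refine Finset.sum_eq_zero fun i _ => ?_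
    rw [mul_smul_comm, map_smul, horth _ _ _ _ hk (by omega), if_neg, smul_zero]
    rintro ⟨h, -⟩
    have := i.1.2
    omega
  refine ⟨fun k hk => ⟨?_, ?_⟩, ?_, ?_⟩
  · by_contra hne
    have h1 : (Q N k).totalDegree < N := lt_of_le_of_ne (hdeg N k hk) hne
    have h2 := hlow k hk _ h1
    rw [horth _ _ _ _ hk hk] at h2
    simp at h2
  · intro R hR
    rw [← hL]; exact hlow k hk R hR
  · intro k hk j hj
    rw [← hL, horth _ _ _ _ hk hj]
    simp
  · rintro R ⟨hR, hR'⟩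
    rw [Q8_expand L Q hdeg horth N R hR.le]
    refine Submodule.sum_mem _ fun i _ => ?_
    by_cases h : i.1.1 = N
    · refine Submodule.smul_mem _ _ (Submodule.subset_span ?_)
      refine ⟨i.2, ?_, ?_⟩
      · have := i.2.2
        simp only [Set.mem_Iic]; omega
      · exact congrArg (fun z => Q z (i.2 : ℕ)) h.symm
    · have h3 : L (R * Q i.1 i.2) = 0 := by
        rw [hL]
        refine hR' _ (lt_of_le_of_lt (hdeg _ _ (by omega)) (by omega))
      rw [h3, zero_smul]; exact Submodule.zero_mem _

end LinAlg


section Polys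

open MvPolynomial

lemma Q8_evalP_add (P Q : MvPolynomial (Fin 2) ℝ) (q) : evalP (P + Q) q = evalP P q + evalP Q q := by
  simp [evalP]
lemma Q8_evalP_mul (P Q : MvPolynomial (Fin 2) ℝ) (q) : evalP (P * Q) q = evalP P q * evalP Q q := by
  simp [evalP]
lemma Q8_evalP_smul (c : ℝ) (P : MvPolynomial (Fin 2) ℝ) (q) : evalP (c • P) q = c * evalP P q := by
  simp [evalP]
lemma Q8_evalP_sum {ι : Type*} (s : Finset ι) (P : ι → MvPolynomial (Fin 2) ℝ) (q) :
    evalP (∑ i ∈ s, P i) q = ∑ i ∈ s, evalP (P i) q := by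
  simp [evalP]
lemma Q8_evalP_cont (P : MvPolynomial (Fin 2) ℝ) : Continuous (evalP P) := by
  unfold evalP
  refine (MvPolynomial.continuous_eval P).comp ?_
  refine continuous_pi fun i => ?_
  fin_cases i
  · exact continuous_fst
  · exact continuous_snd

lemma Q8_smul_deg (c : ℝ) (P : MvPolynomial (Fin 2) ℝ) : (c • P).totalDegree ≤ P.totalDegree :=
  MvPolynomial.totalDegree_smul_le c P

lemma Q8_psum (m : ℕ) : ∃ P : MvPolynomial (Fin 2) ℝ, P.totalDegree ≤ m ∧
    ∀ s t : ℝ, evalP P (s + t, s * t) = s ^ m + t ^ m := by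
  induction m using Nat.strong_induction_on with
  | _ m ih =>
    match m, ih with
    | 0, _ => exact ⟨C 2, by simp, fun s t => by simp [evalP]; norm_num⟩
    | 1, _ => exact ⟨X 0, by simp, fun s t => by simp [evalP]⟩
    | k + 2, ih =>
      obtain ⟨P, hP, hP'⟩ := ih k (by omega)
      obtain ⟨R, hR, hR'⟩ := ih (k+1) (by omega)
      refine ⟨X 0 * R - X 1 * P, ?_, fun s t => ?_⟩
      · refine (totalDegree_sub _ _).trans (max_le ?_ ?_)
        · refine (totalDegree_mul _ _).trans ?_
          simp only [totalDegree_X]; omega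
        · refine (totalDegree_mul _ _).trans ?_
          simp only [totalDegree_X]; omega
      · have h1 := hP' s t
        have h2 := hR' s t
        simp only [evalP] at h1 h2 ⊢
        simp only [map_sub, map_mul, h1, h2, eval_X]
        simp
        ring

lemma Q8_msum (n i j : ℕ) (hi : i ≤ n) (hj : j ≤ n) : ∃ P : MvPolynomial (Fin 2) ℝ,
    P.totalDegree ≤ n ∧
    ∀ s t : ℝ, evalP P (s + t, s * t) = s ^ i * t ^ j + s ^ j * t ^ i := by
  wlog h : i ≤ j generalizing i j
  · obtain ⟨P, h1, h2⟩ := this j i hj hi (by omega)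
    exact ⟨P, h1, fun s t => by rw [h2]; ring⟩
  obtain ⟨P, hP, hP'⟩ := Q8_psum (j - i)
  refine ⟨X 1 ^ i * P, ?_, fun s t => ?_⟩
  · refine (totalDegree_mul _ _).trans ?_
    rw [totalDegree_X_pow]; omega
  · rw [Q8_evalP_mul, hP']
    obtain ⟨d, rfl⟩ := Nat.exists_eq_add_of_le h
    simp [evalP]
    ring

lemma Q8_sym (n : ℕ) (p q : Polynomial ℝ) (hp : p.natDegree ≤ n) (hq : q.natDegree ≤ n) :
    ∃ P : MvPolynomial (Fin 2) ℝ, P.totalDegree ≤ n ∧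
    ∀ s t : ℝ, evalP P (s + t, s * t) = p.eval s * q.eval t + q.eval s * p.eval t := by
  have := fun i : Fin (n+1) => fun j : Fin (n+1) =>
    Q8_msum n i j (by omega) (by omega)
  choose F hF hF' using this
  refine ⟨∑ i : Fin (n+1), ∑ j : Fin (n+1), (p.coeff i * q.coeff j) • F i j, ?_, fun s t => ?_⟩
  · refine totalDegree_finsetSum_le fun i _ => totalDegree_finsetSum_le fun j _ => ?_
    exact (Q8_smul_deg _ _).trans (hF i j)
  · simp only [Q8_evalP_sum, Q8_evalP_smul, hF']
    have ev : ∀ (r : Polynomial ℝ), r.natDegree ≤ n → ∀ x, r.eval x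
        = ∑ i : Fin (n+1), r.coeff i * x ^ (i : ℕ) := by
      intro r hr x
      rw [Polynomial.eval_eq_sum_range' (Nat.lt_succ_of_le hr), Finset.sum_range]
    rw [ev p hp s, ev p hp t, ev q hq s, ev q hq t, Finset.sum_mul_sum, mul_comm (∑ i, _) (∑ i : Fin (n+1), p.coeff i * t ^ (i:ℕ)),
      Finset.sum_mul_sum, ← Finset.sum_add_distrib]
    refine Finset.sum_congr rfl fun i _ => ?_
    rw [← Finset.sum_add_distrib]
    refine Finset.sum_congr rfl fun j _ => ?_
    ring

lemma Q8_quadSub_eval (P : MvPolynomial (Fin 2) ℝ) (x y : ℝ) :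
    evalP (quadSub P) (x, y) = evalP P (2 * x * y, x ^ 2 + y ^ 2 - 1) := by
  simp only [evalP, quadSub]
  induction P using MvPolynomial.induction_on with
  | C a => simp
  | add p q hp hq => simp only [map_add, hp, hq]
  | mul_X p i hp =>
    simp only [map_mul, hp, aeval_X, eval_X]
    congr 1
    fin_cases i <;> simp

lemma Q8_quadSub_deg (P : MvPolynomial (Fin 2) ℝ) : (quadSub P).totalDegree ≤ 2 * P.totalDegree := by
  unfold quadSub
  conv_lhs => rw [P.as_sum]
  rw [map_sum]
  refine totalDegree_finsetSum_le fun s hs => ?_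
  rw [MvPolynomial.aeval_monomial, Finsupp.prod_fintype _ _ (by simp), Fin.prod_univ_two]
  have h1 : s 0 + s 1 ≤ P.totalDegree := by
    have := MvPolynomial.le_totalDegree hs
    rw [Finsupp.sum_fintype _ _ (by simp)] at this
    simpa only [Fin.sum_univ_two] using this
  have hu : (2 * X 0 * X 1 : MvPolynomial (Fin 2) ℝ).totalDegree ≤ 2 := by
    have : (2 * X 0 * X 1 : MvPolynomial (Fin 2) ℝ) = (2:ℝ) • (X 0 * X 1) := by
      rw [MvPolynomial.smul_eq_C_mul, map_ofNat, mul_assoc]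
    rw [this]
    refine (Q8_smul_deg _ _).trans ((totalDegree_mul _ _).trans ?_)
    simp
  have hv : (X 0 ^ 2 + X 1 ^ 2 - 1 : MvPolynomial (Fin 2) ℝ).totalDegree ≤ 2 := by
    refine (totalDegree_sub _ _).trans (max_le ((totalDegree_add _ _).trans (max_le ?_ ?_)) ?_)
    · simp
    · simp
    · simp
  refine (totalDegree_mul _ _).trans ?_
  rw [MvPolynomial.algebraMap_eq, totalDegree_C, zero_add]
  refine (totalDegree_mul _ _).trans ?_
  have a1 := (totalDegree_pow (2 * X 0 * X 1 : MvPolynomial (Fin 2) ℝ) (s 0)).trans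
    (Nat.mul_le_mul_left (s 0) hu)
  have a2 := (totalDegree_pow (X 0 ^ 2 + X 1 ^ 2 - 1 : MvPolynomial (Fin 2) ℝ) (s 1)).trans
    (Nat.mul_le_mul_left (s 1) hv)
  simp only [Matrix.cons_val_zero, Matrix.cons_val_one]
  omega

end Polys


section Meas

def Q8T : Set (ℝ × ℝ) := {q | q.1 < q.2 ∧ 0 < q.1 + q.2 ∧ q.2 < 1}
def Q8Phi (q : ℝ × ℝ) : ℝ × ℝ := (2 * q.1 * q.2, q.1 ^ 2 + q.2 ^ 2 - 1)
def Q8Psi (q : ℝ × ℝ) : ℝ × ℝ := (q.1 + q.2, q.1 * q.2)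
def Q8D (a b c d : ℝ) : ℝ × ℝ →L[ℝ] ℝ × ℝ :=
  (Matrix.toLin (.finTwoProd ℝ) (.finTwoProd ℝ) !![a, b; c, d]).toContinuousLinearMap

lemma Q8D_det (a b c d : ℝ) : (Q8D a b c d).det = a * d - b * c := by
  unfold Q8D
  simp only [LinearMap.det_toContinuousLinearMap, LinearMap.det_toLin, Matrix.det_fin_two_of]

lemma Q8Psi_deriv (q : ℝ × ℝ) : HasFDerivAt Q8Psi (Q8D 1 1 q.2 q.1) q := by
  unfold Q8D Q8Psi
  rw [Matrix.toLin_finTwoProd_toContinuousLinearMap]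
  convert! HasFDerivAt.prodMk (𝕜 := ℝ) (hasFDerivAt_fst.add hasFDerivAt_snd)
    ((hasFDerivAt_fst (𝕜 := ℝ) (p := q)).mul hasFDerivAt_snd) using 2
  · simp
  · ext <;> simp

lemma Q8Phi_deriv (q : ℝ × ℝ) :
    HasFDerivAt Q8Phi (Q8D (2 * q.2) (2 * q.1) (2 * q.1) (2 * q.2)) q := by
  unfold Q8D Q8Phi
  rw [Matrix.toLin_finTwoProd_toContinuousLinearMap]
  convert! HasFDerivAt.prodMk (𝕜 := ℝ)
    (((hasFDerivAt_fst (𝕜 := ℝ) (p := q)).const_mul (2:ℝ)).mul hasFDerivAt_snd)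
    ((((hasFDerivAt_fst (𝕜 := ℝ) (p := q)).pow 2).add
      ((hasFDerivAt_snd (𝕜 := ℝ) (p := q)).pow 2)).sub_const 1) using 2
  · ext <;> simp [mul_comm]
  · ext <;> simp

lemma Q8tri_open : IsOpen triDom := by
  unfold triDom
  exact (isOpen_lt continuous_const continuous_fst).inter
    ((isOpen_lt continuous_fst continuous_snd).inter (isOpen_lt continuous_snd continuous_const))

lemma Q8T_open : IsOpen Q8T := by
  unfold Q8T
  exact (isOpen_lt continuous_fst continuous_snd).inter
    ((isOpen_lt continuous_const (continuous_fst.add continuous_snd)).inter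
      (isOpen_lt continuous_snd continuous_const))

lemma Q8_image_tri : Q8Psi '' triDom = omegaDom := by
  ext q
  constructor
  · rintro ⟨⟨x, y⟩, ⟨h1, h2, h3⟩, rfl⟩
    exact ⟨x, y, h1, h2, h3, rfl⟩
  · rintro ⟨x, y, h1, h2, h3, rfl⟩
    exact ⟨(x, y), ⟨h1, h2, h3⟩, rfl⟩

lemma Q8_inj_tri : InjOn Q8Psi triDom := by
  rintro ⟨x, y⟩ ⟨-, h, -⟩ ⟨x', y'⟩ ⟨-, h', -⟩ he
  simp only [Q8Psi, Prod.mk.injEq] at he h h' ⊢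
  obtain ⟨e1, e2⟩ := he
  have : (y - x) ^ 2 = (y' - x') ^ 2 := by
    have : (x + y) ^ 2 - 4 * (x * y) = (x' + y') ^ 2 - 4 * (x' * y') := by rw [e1, e2]
    linarith
  have h3 : y - x = y' - x' := by
    rwa [sq_eq_sq₀ (by linarith) (by linarith)] at this
  constructor <;> linarith

lemma Q8_inj_T : InjOn Q8Phi Q8T := by
  rintro ⟨x, y⟩ ⟨h, h2, -⟩ ⟨x', y'⟩ ⟨h', h2', -⟩ he
  simp only [Q8Phi, Prod.mk.injEq] at he h h' h2 h2' ⊢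
  obtain ⟨e1, e2⟩ := he
  have h3 : (y - x) ^ 2 = (y' - x') ^ 2 := by nlinarith
  rw [sq_eq_sq₀ (by linarith) (by linarith)] at h3
  have h4 : (y + x) ^ 2 = (y' + x') ^ 2 := by nlinarith
  rw [sq_eq_sq₀ (by linarith) (by linarith)] at h4
  constructor <;> linarith

lemma Q8_image_T : Q8Phi '' Q8T = omegaDom := by
  ext q
  constructor
  · rintro ⟨⟨x, y⟩, ⟨h1, h2, h3⟩, rfl⟩
    simp only at h1 h2 h3
    have hx : x ^ 2 < 1 := by nlinarith
    have hy : y ^ 2 < 1 := by nlinarith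
    have hD : 0 < (1 - x ^ 2) * (1 - y ^ 2) := mul_pos (by linarith) (by linarith)
    set r := √((1 - x ^ 2) * (1 - y ^ 2)) with hr
    have hr0 : 0 < r := Real.sqrt_pos.2 hD
    have hr2 : r ^ 2 = (1 - x ^ 2) * (1 - y ^ 2) := Real.sq_sqrt hD.le
    have hxy : x * y < 1 := by nlinarith
    have hxy' : -1 < x * y := by nlinarith
    have ha : r < 1 - x * y := by
      refine lt_of_pow_lt_pow_left₀ 2 (by linarith) ?_
      have : 0 < (y - x) ^ 2 := by have : 0 < y - x := by linarith
                                   positivity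
      nlinarith
    have hb : r < 1 + x * y := by
      refine lt_of_pow_lt_pow_left₀ 2 (by linarith) ?_
      have : 0 < (x + y) ^ 2 := by positivity
      nlinarith
    refine ⟨x * y - r, x * y + r, by linarith, by linarith, by linarith, ?_⟩
    simp only [Q8Phi, Prod.mk.injEq]
    constructor
    · ring
    · nlinarith
  · rintro ⟨s, t, h1, h2, h3, rfl⟩
    have hA : 0 < (1 + s) * (1 + t) := mul_pos (by linarith) (by linarith)
    have hB : 0 < (1 - s) * (1 - t) := mul_pos (by linarith) (by linarith)
    set A := √((1 + s) * (1 + t)) with hAd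
    set B := √((1 - s) * (1 - t)) with hBd
    have hA0 : 0 < A := Real.sqrt_pos.2 hA
    have hA2 : A ^ 2 = (1 + s) * (1 + t) := Real.sq_sqrt hA.le
    have hB0 : 0 < B := Real.sqrt_pos.2 hB
    have hB2 : B ^ 2 = (1 - s) * (1 - t) := Real.sq_sqrt hB.le
    have hst : 0 < (t - s) ^ 2 := by have : 0 < t - s := by linarith
                                     positivity
    have a1 : A < 1 + (s + t) / 2 := by
      refine lt_of_pow_lt_pow_left₀ 2 (by linarith) ?_
      nlinarith
    have b1 : B < 1 - (s + t) / 2 := by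
      refine lt_of_pow_lt_pow_left₀ 2 (by linarith) ?_
      nlinarith
    refine ⟨((A - B) / 2, (A + B) / 2), ⟨?_, ?_, ?_⟩, ?_⟩
    · simp only; linarith
    · simp only; linarith
    · simp only; linarith
    · simp only [Q8Phi, Prod.mk.injEq]
      constructor <;> nlinarith

/-- swapping -/
def Q8s1 : ℝ × ℝ ≃ᵐ ℝ × ℝ := MeasurableEquiv.prodComm
def Q8s2 : ℝ × ℝ ≃ᵐ ℝ × ℝ :=
  (MeasurableEquiv.prodComm).trans (MeasurableEquiv.prodCongr (MeasurableEquiv.neg ℝ) (MeasurableEquiv.neg ℝ))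

lemma Q8s1_apply (q : ℝ × ℝ) : Q8s1 q = (q.2, q.1) := rfl
lemma Q8s2_apply (q : ℝ × ℝ) : Q8s2 q = (-q.2, -q.1) := rfl
lemma Q8s1_mp : MeasurePreserving Q8s1 (volume : Measure (ℝ × ℝ)) volume := Measure.measurePreserving_swap
lemma Q8s2_mp : MeasurePreserving Q8s2 (volume : Measure (ℝ × ℝ)) volume := by
  have h := (Measure.measurePreserving_neg (volume : Measure ℝ)).prod
    (Measure.measurePreserving_neg (volume : Measure ℝ))
  exact h.comp Q8s1_mp

lemma Q8_symm (σ : ℝ × ℝ ≃ᵐ ℝ × ℝ) (hσ : MeasurePreserving σ (volume : Measure (ℝ × ℝ)) volume)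
    (f : ℝ × ℝ → ℝ) (hf : ∀ q, f (σ q) = f q) (S T : Set (ℝ × ℝ)) (hT : MeasurableSet T)
    (hd : Disjoint T (σ ⁻¹' T))
    (hS : S =ᵐ[volume] (T ∪ σ ⁻¹' T : Set (ℝ × ℝ))) :
    (IntegrableOn f T → IntegrableOn f S) ∧ (IntegrableOn f T → ∫ q in S, f q = 2 * ∫ q in T, f q) := by
  have h1 : ∫ q in σ ⁻¹' T, f q = ∫ q in T, f q := by
    have := hσ.setIntegral_preimage_emb σ.measurableEmbedding f T
    simpa only [hf] using this
  have h2 : IntegrableOn f T → IntegrableOn f (σ ⁻¹' T) := by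
    intro h
    rw [← hσ.integrableOn_comp_preimage σ.measurableEmbedding] at h
    refine h.congr_fun (fun q _ => hf q) (σ.measurable hT)
  constructor
  · intro h
    rw [integrableOn_congr_set_ae hS]
    exact h.union (h2 h)
  · intro h
    rw [setIntegral_congr_set hS, setIntegral_union hd (σ.measurable hT) h (h2 h), h1]
    ring

lemma Q8_line_null (a b : ℝ) (h : a ≠ 0 ∨ b ≠ 0) :
    (volume : Measure (ℝ × ℝ)) {q | a * q.1 + b * q.2 = 0} = 0 := by
  let l : ℝ × ℝ →ₗ[ℝ] ℝ := a • LinearMap.fst ℝ ℝ ℝ + b • LinearMap.snd ℝ ℝ ℝ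
  have : {q : ℝ × ℝ | a * q.1 + b * q.2 = 0} = (LinearMap.ker l : Set (ℝ × ℝ)) := by
    ext q; simp [l]
  rw [this]
  refine Measure.addHaar_submodule _ _ ?_
  intro ht
  rw [LinearMap.ker_eq_top] at ht
  have e1 := LinearMap.congr_fun ht (1, 0)
  have e2 := LinearMap.congr_fun ht (0, 1)
  simp [l] at e1 e2
  tauto

lemma Q8_sq_ae : sqDom =ᵐ[volume] (Ioo (-1:ℝ) 1 ×ˢ Ioo (-1:ℝ) 1 : Set (ℝ × ℝ)) := by
  unfold sqDom
  rw [Measure.volume_eq_prod]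
  exact Measure.set_prod_ae_eq Ioo_ae_eq_Icc.symm Ioo_ae_eq_Icc.symm

lemma Q8_ae_of_null (S T N : Set (ℝ × ℝ)) (hTS : T ⊆ S) (h : S ⊆ T ∪ N) (hN : volume N = 0) :
    S =ᵐ[volume] T := by
  refine (ae_le_set.2 (measure_mono_null ?_ hN)).antisymm hTS.eventuallyLE
  rintro q ⟨h1, h2⟩
  exact (h h1).resolve_left h2

lemma Q8_sq_tri : sqDom =ᵐ[volume] (triDom ∪ Q8s1 ⁻¹' triDom : Set (ℝ × ℝ)) := by
  refine Q8_sq_ae.trans (Q8_ae_of_null _ _ {q | 1 * q.1 + (-1) * q.2 = 0} ?_ ?_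
    (Q8_line_null _ _ (by simp)))
  · rintro ⟨x, y⟩ (h | h) <;> simp [triDom, Q8s1_apply] at h ⊢ <;>
      refine ⟨⟨?_, ?_⟩, ?_, ?_⟩ <;> linarith
  · rintro ⟨x, y⟩ h
    simp [triDom, Q8s1_apply] at h ⊢
    rcases lt_trichotomy x y with h1 | h1 | h1
    · left; left; exact ⟨h.1.1, h1, h.2.2⟩
    · right; linarith
    · left; right; exact ⟨h.2.1, h1, h.1.2⟩

lemma Q8_tri_T : triDom =ᵐ[volume] (Q8T ∪ Q8s2 ⁻¹' Q8T : Set (ℝ × ℝ)) := by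
  refine Q8_ae_of_null _ _ {q | 1 * q.1 + 1 * q.2 = 0} ?_ ?_
    (Q8_line_null _ _ (by simp))
  · rintro ⟨x, y⟩ (h | h) <;> simp [triDom, Q8T, Q8s2_apply] at h ⊢ <;>
      refine ⟨?_, ?_, ?_⟩ <;> linarith
  · rintro ⟨x, y⟩ h
    simp [triDom, Q8T, Q8s2_apply] at h ⊢
    rcases lt_trichotomy (x + y) 0 with h1 | h1 | h1
    · left; right; refine ⟨?_, ?_, ?_⟩ <;> linarith
    · right; linarith
    · left; left; refine ⟨?_, ?_, ?_⟩ <;> linarith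

lemma Q8_disj1 : Disjoint triDom (Q8s1 ⁻¹' triDom) := by
  rw [Set.disjoint_left]
  rintro ⟨x, y⟩ h h'
  simp [triDom, Q8s1_apply] at h h'
  linarith

lemma Q8_disj2 : Disjoint Q8T (Q8s2 ⁻¹' Q8T) := by
  rw [Set.disjoint_left]
  rintro ⟨x, y⟩ h h'
  simp [Q8T, Q8s2_apply] at h h'
  linarith

lemma Q8_odd (σ : ℝ × ℝ ≃ᵐ ℝ × ℝ) (hσ : MeasurePreserving σ (volume : Measure (ℝ × ℝ)) volume)
    (hS : σ ⁻¹' sqDom = sqDom) (f : ℝ × ℝ → ℝ) (hf : ∀ q, f (σ q) = - f q) :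
    ∫ q in sqDom, f q = 0 := by
  have := hσ.setIntegral_preimage_emb σ.measurableEmbedding f sqDom
  rw [hS] at this
  simp only [hf, integral_neg] at this
  linarith

lemma Q8_pre1 : Q8s1 ⁻¹' sqDom = sqDom := by
  ext ⟨x, y⟩; simp [sqDom, Q8s1_apply]; tauto
lemma Q8_pre2 : Q8s2 ⁻¹' sqDom = sqDom := by
  ext ⟨x, y⟩; simp [sqDom, Q8s2_apply]
  constructor <;> rintro ⟨⟨_, _⟩, _, _⟩ <;> refine ⟨⟨?_, ?_⟩, ?_, ?_⟩ <;> linarith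

end Meas


section Weights

def Q8WO (a b : ℝ) (q : ℝ × ℝ) : ℝ :=
  (1 - q.1 + q.2) ^ a * (1 + q.1 + q.2) ^ b * (q.1^2 - 4*q.2) ^ (-(1/2) : ℝ)
def Q8WT (a b : ℝ) (q : ℝ × ℝ) : ℝ :=
  |q.1 - q.2| ^ (2*a+1) * |q.1 + q.2| ^ (2*b+1)
        * (1 - q.1^2) ^ (-(1/2) : ℝ) * (1 - q.2^2) ^ (-(1/2) : ℝ)

lemma Q8_sq_rpow (z a : ℝ) (hz : 0 < z) : (z ^ 2) ^ a = z ^ (2 * a) := by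
  rw [Real.rpow_mul hz.le]; norm_num

lemma Q8_w_tri (a b : ℝ) (q : ℝ × ℝ) (hq : q ∈ triDom) :
    |(Q8D 1 1 q.2 q.1).det| * Q8WO a b (Q8Psi q) = Jw a b q.1 * Jw a b q.2 := by
  obtain ⟨x, y⟩ := q
  obtain ⟨h1, h2, h3⟩ := hq
  simp only at h1 h2 h3
  rw [Q8D_det]
  simp only [Q8WO, Q8Psi, Jw]
  have e1 : 1 - (x + y) + x * y = (1 - x) * (1 - y) := by ring
  have e2 : 1 + (x + y) + x * y = (1 + x) * (1 + y) := by ring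
  have e3 : (x + y) ^ 2 - 4 * (x * y) = (y - x) ^ 2 := by ring
  have e4 : |1 * x - 1 * y| = y - x := by
    rw [one_mul, one_mul, abs_sub_comm, abs_of_pos (by linarith)]
  rw [e1, e2, e3, e4, Real.mul_rpow (by linarith) (by linarith),
    Real.mul_rpow (by linarith) (by linarith), Q8_sq_rpow _ _ (by linarith)]
  have e5 : (2 * (-(1/2)) : ℝ) = -1 := by norm_num
  rw [e5, Real.rpow_neg_one]
  have : y - x ≠ 0 := by linarith
  field_simp

lemma Q8_w_T (a b : ℝ) (q : ℝ × ℝ) (hq : q ∈ Q8T) :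
    |(Q8D (2 * q.2) (2 * q.1) (2 * q.1) (2 * q.2)).det| * Q8WO a b (Q8Phi q) = 2 * Q8WT a b q := by
  obtain ⟨x, y⟩ := q
  obtain ⟨h1, h2, h3⟩ := hq
  simp only at h1 h2 h3
  have hx : x ^ 2 < 1 := by nlinarith
  have hy : y ^ 2 < 1 := by nlinarith
  rw [Q8D_det]
  simp only [Q8WO, Q8Phi, Q8WT]
  have e1 : 1 - 2 * x * y + (x ^ 2 + y ^ 2 - 1) = (y - x) ^ 2 := by ring
  have e2 : 1 + 2 * x * y + (x ^ 2 + y ^ 2 - 1) = (x + y) ^ 2 := by ring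
  have e3 : (2 * x * y) ^ 2 - 4 * (x ^ 2 + y ^ 2 - 1) = 2 ^ 2 * ((1 - x ^ 2) * (1 - y ^ 2)) := by ring
  have e4 : |2 * y * (2 * y) - 2 * x * (2 * x)| = 4 * ((y - x) * (x + y)) := by
    rw [abs_of_pos (by nlinarith)]; ring
  have e5 : (2 * (-(1/2)) : ℝ) = -1 := by norm_num
  rw [e1, e2, e3, e4, Real.mul_rpow (by norm_num) (mul_nonneg (by linarith) (by linarith)),
    Real.mul_rpow (by linarith) (by linarith), Q8_sq_rpow _ _ (by linarith),
    Q8_sq_rpow _ _ (by linarith), Q8_sq_rpow _ _ (by norm_num), e5, Real.rpow_neg_one,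
    abs_sub_comm, abs_of_pos (show 0 < y - x by linarith), abs_of_pos h2,
    Real.rpow_add (by linarith), Real.rpow_add h2, Real.rpow_one, Real.rpow_one]
  ring

lemma Q8_JJ_int (a b : ℝ) (hw : IntegrableOn (Jw a b) (Icc (-1:ℝ) 1)) :
    IntegrableOn (fun q : ℝ × ℝ => Jw a b q.1 * Jw a b q.2) sqDom := by
  have := Integrable.mul_prod hw hw
  rw [Measure.prod_restrict] at this
  exact this

lemma Q8_sqc : IsCompact sqDom := isCompact_Icc.prod isCompact_Icc

lemma Q8_OmTri (a b : ℝ) (hw : IntegrableOn (Jw a b) (Icc (-1:ℝ) 1)) (h : ℝ × ℝ → ℝ)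
    (hc : Continuous h) :
    IntegrableOn (fun q => h q * Q8WO a b q) omegaDom ∧
    2 * ∫ q in omegaDom, h q * Q8WO a b q
      = ∫ q in sqDom, h (Q8Psi q) * (Jw a b q.1 * Jw a b q.2) := by
  have hPc : Continuous Q8Psi := by unfold Q8Psi; fun_prop
  have i1 : IntegrableOn (fun q => h (Q8Psi q) * (Jw a b q.1 * Jw a b q.2)) sqDom :=
    IntegrableOn.continuousOn_mul (hc.comp hPc).continuousOn (Q8_JJ_int a b hw) Q8_sqc
  have i2 : IntegrableOn (fun q => h (Q8Psi q) * (Jw a b q.1 * Jw a b q.2)) triDom := by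
    refine i1.mono_set ?_
    rintro ⟨x, y⟩ ⟨h1, h2, h3⟩
    simp only at h1 h2 h3
    refine ⟨⟨?_, ?_⟩, ?_, ?_⟩ <;> simp only <;> linarith
  have hcong : ∀ q ∈ triDom, |(Q8D 1 1 q.2 q.1).det| • (h (Q8Psi q) * Q8WO a b (Q8Psi q))
      = h (Q8Psi q) * (Jw a b q.1 * Jw a b q.2) := by
    intro q hq
    rw [← Q8_w_tri a b q hq, smul_eq_mul]; ring
  have hm := Q8tri_open.measurableSet
  have hs := (Q8_symm Q8s1 Q8s1_mp (fun q => h (Q8Psi q) * (Jw a b q.1 * Jw a b q.2))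
    (by intro q; simp only [Q8Psi, Q8s1_apply, add_comm q.2 q.1, mul_comm q.2 q.1,
          mul_comm (Jw a b q.2)])
    sqDom triDom hm Q8_disj1 Q8_sq_tri).2 i2
  constructor
  · rw [← Q8_image_tri, integrableOn_image_iff_integrableOn_abs_det_fderiv_smul volume hm
      (fun q _ => (Q8Psi_deriv q).hasFDerivWithinAt) Q8_inj_tri]
    exact i2.congr_fun (fun q hq => (hcong q hq).symm) hm
  · rw [hs, ← Q8_image_tri, integral_image_eq_integral_abs_det_fderiv_smul volume hm
      (fun q _ => (Q8Psi_deriv q).hasFDerivWithinAt) Q8_inj_tri]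
    rw [setIntegral_congr_fun hm hcong]

lemma Q8WT_s1 (a b : ℝ) (q : ℝ × ℝ) : Q8WT a b (Q8s1 q) = Q8WT a b q := by
  simp only [Q8WT, Q8s1_apply, abs_sub_comm q.2 q.1, add_comm q.2 q.1]; ring
lemma Q8WT_s2 (a b : ℝ) (q : ℝ × ℝ) : Q8WT a b (Q8s2 q) = Q8WT a b q := by
  have e1 : -q.2 - -q.1 = q.1 - q.2 := by ring
  have e2 : -q.2 + -q.1 = -(q.1 + q.2) := by ring
  simp only [Q8WT, Q8s2_apply, e1, e2, abs_neg, neg_sq]; ring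
lemma Q8Phi_s1 (q : ℝ × ℝ) : Q8Phi (Q8s1 q) = Q8Phi q := by
  simp only [Q8Phi, Q8s1_apply, Prod.mk.injEq]; constructor <;> ring
lemma Q8Phi_s2 (q : ℝ × ℝ) : Q8Phi (Q8s2 q) = Q8Phi q := by
  simp only [Q8Phi, Q8s2_apply, Prod.mk.injEq]; constructor <;> ring

lemma Q8_OmT (a b : ℝ) (h : ℝ × ℝ → ℝ)
    (hi : IntegrableOn (fun q => h q * Q8WO a b q) omegaDom) :
    IntegrableOn (fun q => h (Q8Phi q) * Q8WT a b q) sqDom ∧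
    ∫ q in sqDom, h (Q8Phi q) * Q8WT a b q = 2 * ∫ q in omegaDom, h q * Q8WO a b q := by
  have hm := Q8T_open.measurableSet
  have hcong : ∀ q ∈ Q8T, |(Q8D (2 * q.2) (2 * q.1) (2 * q.1) (2 * q.2)).det| •
      (h (Q8Phi q) * Q8WO a b (Q8Phi q)) = 2 * (h (Q8Phi q) * Q8WT a b q) := by
    intro q hq
    have := Q8_w_T a b q hq
    rw [smul_eq_mul]
    linear_combination (h (Q8Phi q)) * this
  have i1 : IntegrableOn (fun q => h (Q8Phi q) * Q8WT a b q) Q8T := by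
    rw [← Q8_image_T, integrableOn_image_iff_integrableOn_abs_det_fderiv_smul volume hm
      (fun q _ => (Q8Phi_deriv q).hasFDerivWithinAt) Q8_inj_T] at hi
    have := (hi.congr_fun hcong hm).const_mul (1/2)
    refine this.congr (ae_of_all _ fun q => ?_)
    simp only; ring
  obtain ⟨s1, s2⟩ := Q8_symm Q8s2 Q8s2_mp (fun q => h (Q8Phi q) * Q8WT a b q)
    (by intro q; simp only [Q8Phi_s2, Q8WT_s2]) triDom Q8T hm Q8_disj2 Q8_tri_T
  obtain ⟨t1, t2⟩ := Q8_symm Q8s1 Q8s1_mp (fun q => h (Q8Phi q) * Q8WT a b q)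
    (by intro q; simp only [Q8Phi_s1, Q8WT_s1]) sqDom triDom Q8tri_open.measurableSet
    Q8_disj1 Q8_sq_tri
  refine ⟨t1 (s1 i1), ?_⟩
  rw [t2 (s1 i1), s2 i1, ← Q8_image_T, integral_image_eq_integral_abs_det_fderiv_smul volume hm
      (fun q _ => (Q8Phi_deriv q).hasFDerivWithinAt) Q8_inj_T, setIntegral_congr_fun hm hcong,
      integral_const_mul]

end Weights


section Core

def Q8k (n k : ℕ) : ℝ := if k = n then 1/2 else (√2)⁻¹

lemma Q8_Jint (a b c : ℝ)
    (hc1 : (∫ x in Icc (-1:ℝ) 1, c * (1 - x) ^ a * (1 + x) ^ b) = 1) :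
    IntegrableOn (Jw a b) (Icc (-1:ℝ) 1) ∧ c * (∫ x in Icc (-1:ℝ) 1, Jw a b x) = 1 := by
  have e : ∀ x : ℝ, c * (1 - x) ^ a * (1 + x) ^ b = c * Jw a b x := fun x => by
    rw [Jw]; ring
  simp only [e, integral_const_mul] at hc1
  refine ⟨?_, hc1⟩
  by_contra hn
  rw [integral_undef hn] at hc1
  simp at hc1

lemma Q8_prodint (a b : ℝ) (A B : ℝ → ℝ) :
    ∫ q in sqDom, (A q.1 * B q.2) * (Jw a b q.1 * Jw a b q.2)
      = (∫ x in Icc (-1:ℝ) 1, A x * Jw a b x) * ∫ x in Icc (-1:ℝ) 1, B x * Jw a b x := by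
  unfold sqDom
  rw [Measure.volume_eq_prod, ← setIntegral_prod_mul]
  refine integral_congr_ae (ae_of_all _ fun q => ?_)
  simp only; ring

lemma Q8_prodintble (a b : ℝ) (hw : IntegrableOn (Jw a b) (Icc (-1:ℝ) 1)) (A B : ℝ → ℝ)
    (hA : Continuous A) (hB : Continuous B) :
    IntegrableOn (fun q : ℝ × ℝ => (A q.1 * B q.2) * (Jw a b q.1 * Jw a b q.2)) sqDom :=
  IntegrableOn.continuousOn_mul
    ((hA.comp continuous_fst).mul (hB.comp continuous_snd)).continuousOn (Q8_JJ_int a b hw) Q8_sqc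

lemma Q8_a_eq (a b c A : ℝ)
    (hc1 : (∫ x in Icc (-1:ℝ) 1, c * (1 - x) ^ a * (1 + x) ^ b) = 1)
    (hA : (∫ q in omegaDom, 2 * A * (1 - q.1 + q.2) ^ a * (1 + q.1 + q.2) ^ b
        * (q.1^2 - 4*q.2) ^ (-(1/2) : ℝ)) = 1) : A = c ^ 2 := by
  obtain ⟨hw, h1⟩ := Q8_Jint a b c hc1
  have h2 := (Q8_OmTri a b hw (fun _ => 1) continuous_const).2
  have h3 := Q8_prodint a b (fun _ => 1) (fun _ => 1)
  simp only [one_mul, mul_one] at h2 h3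
  rw [h3] at h2
  have e : ∀ q : ℝ × ℝ, 2 * A * (1 - q.1 + q.2) ^ a * (1 + q.1 + q.2) ^ b
        * (q.1^2 - 4*q.2) ^ (-(1/2) : ℝ) = (2 * A) * Q8WO a b q := fun q => by
    rw [Q8WO]; ring
  simp only [e, integral_const_mul] at hA
  set J := ∫ x in Icc (-1:ℝ) 1, Jw a b x
  have h5 : A * (J * J) = 1 := by rw [← h2]; linarith
  calc A = A * (c * J) * (c * J) := by rw [h1]; ring
    _ = c ^ 2 * (A * (J * J)) := by ring
    _ = c ^ 2 := by rw [h5]; ring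

lemma Q8_KK (a b c : ℝ) (hc : 0 < c) (p : ℕ → Polynomial ℝ)
    (hw : IntegrableOn (Jw a b) (Icc (-1:ℝ) 1))
    (hp : IsONPS (fun x => c * (1 - x) ^ a * (1 + x) ^ b) p) (n k m l : ℕ) (hk : k ≤ n) (hl : l ≤ m) :
    ∫ q in sqDom,
      (Q8k n k * ((p n).eval q.1 * (p k).eval q.2 + (p k).eval q.1 * (p n).eval q.2)) *
      (Q8k m l * ((p m).eval q.1 * (p l).eval q.2 + (p l).eval q.1 * (p m).eval q.2)) *
      (Jw a b q.1 * Jw a b q.2) = (if n = m ∧ k = l then 1 else 0) / c ^ 2 := by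
  have hI : ∀ n m, ∫ x in Icc (-1:ℝ) 1, ((p n).eval x * (p m).eval x) * Jw a b x
      = (if n = m then 1 else 0) / c := by
    intro n m
    rw [← hp.2.2 n m, eq_div_iff hc.ne', mul_comm, ← integral_const_mul]
    refine integral_congr_ae (ae_of_all _ fun q => ?_)
    simp only [Jw]; ring
  have hcont : ∀ n m, Continuous (fun x => (p n).eval x * (p m).eval x) := fun n m =>
    (p n).continuous.mul (p m).continuous
  let T : ℕ → ℕ → ℕ → ℕ → ℝ × ℝ → ℝ := fun i j i' j' q =>
    (((p i).eval q.1 * (p j).eval q.1) * ((p i').eval q.2 * (p j').eval q.2)) *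
      (Jw a b q.1 * Jw a b q.2)
  have hT : ∀ i j i' j', ∫ q in sqDom, T i j i' j' q
      = ((if i = j then 1 else 0) / c) * ((if i' = j' then 1 else 0) / c) := by
    intro i j i' j'
    rw [← hI, ← hI]
    exact Q8_prodint a b (fun x => (p i).eval x * (p j).eval x) (fun x => (p i').eval x * (p j').eval x)
  have hTi : ∀ i j i' j', IntegrableOn (T i j i' j') sqDom := fun i j i' j' =>
    Q8_prodintble a b hw _ _ (hcont i j) (hcont i' j')
  have : ∀ q : ℝ × ℝ, (Q8k n k * ((p n).eval q.1 * (p k).eval q.2 + (p k).eval q.1 * (p n).eval q.2)) *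
      (Q8k m l * ((p m).eval q.1 * (p l).eval q.2 + (p l).eval q.1 * (p m).eval q.2)) *
      (Jw a b q.1 * Jw a b q.2) = (Q8k n k * Q8k m l) *
        ((T n m k l q + T n l k m q) + (T k m n l q + T k l n m q)) := by
    intro q; simp only [T]; ring
  simp only [this]
  have hadd : ∫ q in sqDom, ((T n m k l q + T n l k m q) + (T k m n l q + T k l n m q))
      = ((∫ q in sqDom, T n m k l q) + ∫ q in sqDom, T n l k m q)
        + ((∫ q in sqDom, T k m n l q) + ∫ q in sqDom, T k l n m q) := by
    rw [← integral_add (hTi n m k l) (hTi n l k m), ← integral_add (hTi k m n l) (hTi k l n m)]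
    exact integral_add ((hTi n m k l).add (hTi n l k m)) ((hTi k m n l).add (hTi k l n m))
  rw [integral_const_mul, hadd]
  simp only [hT]
  have h2 : (√2)⁻¹ * (√2)⁻¹ = (1/2 : ℝ) := by
    rw [← mul_inv, Real.mul_self_sqrt (by norm_num)]; norm_num
  have hc0 := hc.ne'
  by_cases hnm : n = m
  · subst hnm
    by_cases hkl : k = l
    · subst hkl
      by_cases hkn : k = n
      · subst hkn
        simp [Q8k]; field_simp; norm_num
      · have hkn' : n ≠ k := fun h => hkn h.symm
        simp only [Q8k, if_neg hkn, if_neg hkn', h2]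
        simp; field_simp; norm_num
    · have : ¬ (n = l ∧ k = n) := by omega
      by_cases h3 : n = l
      · have h4 : k ≠ n := by omega
        have h5 : l ≠ k := by omega
        simp [hkl, h4, h4.symm]
      · simp [hkl, h3, Ne.symm h3]
  · have h0 : ¬ (n = m ∧ k = l) := by tauto
    rw [if_neg h0]
    simp only [hnm, Ne.symm hnm, if_false, zero_div, zero_mul, mul_zero, zero_add, add_zero]
    have : ¬ (n = l ∧ k = m) := by omega
    by_cases h3 : n = l
    · have h4 : k ≠ m := by omega
      simp [h4]
    · simp [h3]

open MvPolynomial in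
def Q8f (i j : Bool) : MvPolynomial (Fin 2) ℝ :=
  (X 0 - X 1) ^ i.toNat * (X 0 + X 1) ^ j.toNat

lemma Q8f_eval (i j : Bool) (q : ℝ × ℝ) : evalP (Q8f i j) q
    = (q.1 - q.2) ^ i.toNat * (q.1 + q.2) ^ j.toNat := by
  simp [evalP, Q8f]

open MvPolynomial in
lemma Q8f_deg (i j : Bool) : (Q8f i j).totalDegree ≤ i.toNat + j.toNat := by
  unfold Q8f
  refine (totalDegree_mul _ _).trans ?_
  have h1 : (X 0 - X 1 : MvPolynomial (Fin 2) ℝ).totalDegree ≤ 1 :=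
    (totalDegree_sub _ _).trans (by simp)
  have h2 : (X 0 + X 1 : MvPolynomial (Fin 2) ℝ).totalDegree ≤ 1 :=
    (totalDegree_add _ _).trans (by simp)
  have a1 := (totalDegree_pow (X 0 - X 1 : MvPolynomial (Fin 2) ℝ) i.toNat).trans
    (Nat.mul_le_mul_left _ h1)
  have a2 := (totalDegree_pow (X 0 + X 1 : MvPolynomial (Fin 2) ℝ) j.toNat).trans
    (Nat.mul_le_mul_left _ h2)
  omega

lemma Q8_abs_shift (z a : ℝ) (ha : -1 < a) (i : Bool) :
    (z ^ i.toNat) ^ 2 * |z| ^ (2 * a + 1) = |z| ^ (2 * (a + i.toNat) + 1) := by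
  cases i
  · simp
  · simp only [Bool.toNat_true, pow_one, Nat.cast_one]
    rcases eq_or_ne z 0 with rfl | hz
    · rw [abs_zero, Real.zero_rpow (x := 2 * (a + 1) + 1) (by linarith)]; simp
    · rw [← sq_abs, show 2 * (a + 1) + 1 = 2 + (2 * a + 1) by ring,
        Real.rpow_add (abs_pos.2 hz) 2, Real.rpow_two]

lemma Q8_f_WT (a b : ℝ) (ha : -1 < a) (hb : -1 < b) (i j : Bool) (q : ℝ × ℝ) :
    evalP (Q8f i j) q ^ 2 * Q8WT a b q = Q8WT (a + i.toNat) (b + j.toNat) q := by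
  rw [Q8f_eval]
  simp only [Q8WT, ← Q8_abs_shift _ a ha i, ← Q8_abs_shift _ b hb j]
  ring

lemma Q8_core (α β : ℝ) (hα : -1 < α) (hβ : -1 < β) (c a : Bool → Bool → ℝ)
    (p : Bool → Bool → ℕ → Polynomial ℝ)
    (hcp : ∀ i j, 0 < c i j) (hap : ∀ i j, 0 < a i j)
    (hc : ∀ i j, (∫ x in Icc (-1:ℝ) 1, c i j * (1 - x) ^ (α + i.toNat)
      * (1 + x) ^ (β + j.toNat)) = 1)
    (hp : ∀ i j, IsONPS (fun x => c i j * (1 - x) ^ (α + i.toNat) * (1 + x) ^ (β + j.toNat)) (p i j))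
    (ha : ∀ i j, (∫ q in omegaDom, 2 * a i j * (1 - q.1 + q.2) ^ (α + i.toNat)
        * (1 + q.1 + q.2) ^ (β + j.toNat) * (q.1^2 - 4*q.2) ^ (-(1/2) : ℝ)) = 1)
    (CW : ℝ × ℝ → ℝ) (aab : ℝ) (haab : aab = a false false)
    (hCW : ∀ q : ℝ × ℝ, CW q = aab * Q8WT α β q) :
    ∃ (L : MvPolynomial (Fin 2) ℝ →ₗ[ℝ] ℝ) (E : Bool → Bool → ℕ → ℕ → MvPolynomial (Fin 2) ℝ),
      (∀ P Q : MvPolynomial (Fin 2) ℝ, L (P * Q) = ∫ q in sqDom, evalP P q * evalP Q q * CW q) ∧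
      (∀ i j n k, k ≤ n → (E i j n k).totalDegree ≤ i.toNat + j.toNat + 2 * n) ∧
      (∀ i j n k, k ≤ n → ∀ θ φ : ℝ, evalP (E i j n k) (Real.cos θ, Real.cos φ)
        = √(a i j / aab) * ((Real.cos θ - Real.cos φ) ^ i.toNat * (Real.cos θ + Real.cos φ) ^ j.toNat)
          * (Q8k n k * ((p i j n).eval (Real.cos (θ - φ)) * (p i j k).eval (Real.cos (θ + φ))
            + (p i j k).eval (Real.cos (θ - φ)) * (p i j n).eval (Real.cos (θ + φ))))) ∧
      (∀ i j n k i' j' m l, k ≤ n → l ≤ m → L (E i j n k * E i' j' m l)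
        = if i = i' ∧ j = j' ∧ n = m ∧ k = l then 1 else 0) := by
  have haab0 : 0 < aab := haab ▸ hap false false
  have hw := fun i j => (Q8_Jint _ _ _ (hc i j)).1
  have hac := fun i j => Q8_a_eq _ _ _ _ (hc i j) (ha i j)
  have hCWi : IntegrableOn CW sqDom := by
    have h1 := Q8_OmT _ _ (fun _ => 1) (Q8_OmTri _ _ (hw false false) (fun _ => 1) continuous_const).1
    have h2 := h1.1.const_mul aab
    refine h2.congr (ae_of_all _ fun q => ?_)
    simp [hCW]
  have hPi : ∀ P : MvPolynomial (Fin 2) ℝ, IntegrableOn (fun q => evalP P q * CW q) sqDom := fun P =>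
    IntegrableOn.continuousOn_mul (Q8_evalP_cont P).continuousOn hCWi Q8_sqc
  let L : MvPolynomial (Fin 2) ℝ →ₗ[ℝ] ℝ :=
    { toFun := fun P => ∫ q in sqDom, evalP P q * CW q
      map_add' := fun P Q => by
        simp only [Q8_evalP_add, add_mul]
        exact integral_add (hPi P) (hPi Q)
      map_smul' := fun r P => by
        simp only [Q8_evalP_smul, mul_assoc, integral_const_mul, RingHom.id_apply, smul_eq_mul] }
  have hL : ∀ P Q : MvPolynomial (Fin 2) ℝ, L (P * Q) = ∫ q in sqDom, evalP P q * evalP Q q * CW q := by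
    intro P Q
    change ∫ q in sqDom, evalP (P * Q) q * CW q = _
    simp only [Q8_evalP_mul]
  have hex : ∀ i j n k, ∃ P : MvPolynomial (Fin 2) ℝ, k ≤ n → P.totalDegree ≤ n ∧
      ∀ s t : ℝ, evalP P (s + t, s * t) = Q8k n k * ((p i j n).eval s * (p i j k).eval t
        + (p i j k).eval s * (p i j n).eval t) := by
    intro i j n k
    by_cases hk : k ≤ n
    · obtain ⟨P, h1, h2⟩ := Q8_sym n (p i j n) (p i j k) ((hp i j).1 n).le
        (((hp i j).1 k).le.trans hk)
      refine ⟨Q8k n k • P, fun _ => ⟨(Q8_smul_deg _ _).trans h1, fun s t => ?_⟩⟩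
      rw [Q8_evalP_smul, h2]
    · exact ⟨0, fun h => absurd h hk⟩
  choose P hP using hex
  let E : Bool → Bool → ℕ → ℕ → MvPolynomial (Fin 2) ℝ := fun i j n k =>
    √(a i j / aab) • (Q8f i j * quadSub (P i j n k))
  have hEv : ∀ i j n k q, evalP (E i j n k) q
      = √(a i j / aab) * (evalP (Q8f i j) q * evalP (P i j n k) (Q8Phi q)) := by
    intro i j n k q
    simp only [E, Q8_evalP_smul, Q8_evalP_mul]
    have := Q8_quadSub_eval (P i j n k) q.1 q.2
    rw [Prod.mk.eta] at this
    rw [this, Q8Phi]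
  refine ⟨L, E, hL, ?_, ?_, ?_⟩
  · intro i j n k hk
    refine (Q8_smul_deg _ _).trans ((MvPolynomial.totalDegree_mul _ _).trans ?_)
    have h1 := Q8f_deg i j
    have h2 := Q8_quadSub_deg (P i j n k)
    have h3 := (hP i j n k hk).1
    omega
  · intro i j n k hk θ φ
    rw [hEv, Q8f_eval, ← (hP i j n k hk).2]
    have : Q8Phi (Real.cos θ, Real.cos φ)
        = (Real.cos (θ - φ) + Real.cos (θ + φ), Real.cos (θ - φ) * Real.cos (θ + φ)) := by
      simp only [Q8Phi, Prod.mk.injEq, Real.cos_sub, Real.cos_add]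
      constructor
      · ring
      · have h1 := Real.sin_sq_add_cos_sq θ
        have h2 := Real.sin_sq_add_cos_sq φ
        have h1' : Real.sin θ ^ 2 = 1 - Real.cos θ ^ 2 := by linarith
        have h2' : Real.sin φ ^ 2 = 1 - Real.cos φ ^ 2 := by linarith
        have : (Real.cos θ * Real.cos φ + Real.sin θ * Real.sin φ) *
          (Real.cos θ * Real.cos φ - Real.sin θ * Real.sin φ) =
          Real.cos θ ^ 2 * Real.cos φ ^ 2 - Real.sin θ ^ 2 * Real.sin φ ^ 2 := by ring
        rw [this, h1', h2']; ring
    rw [this]; ring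
  · intro i j n k i' j' m l hk hl
    rw [hL]
    by_cases hi : i = i'
    swap
    · rw [if_neg (by tauto)]
      refine Q8_odd Q8s1 Q8s1_mp Q8_pre1 _ fun q => ?_
      simp only [hEv, hCW, Q8Phi_s1, Q8WT_s1, Q8f_eval]
      simp only [Q8s1_apply, add_comm q.2 q.1]
      cases i <;> cases i' <;> simp at hi ⊢ <;> ring
    by_cases hj : j = j'
    swap
    · rw [if_neg (by tauto)]
      refine Q8_odd Q8s2 Q8s2_mp Q8_pre2 _ fun q => ?_
      have e1 : -q.2 - -q.1 = q.1 - q.2 := by ring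
      have e2 : -q.2 + -q.1 = -(q.1 + q.2) := by ring
      simp only [hEv, hCW, Q8Phi_s2, Q8WT_s2, Q8f_eval]
      simp only [Q8s2_apply, e1, e2]
      cases j <;> cases j' <;> simp at hj ⊢ <;> ring
    subst hi hj
    have hsq : √(a i j / aab) * √(a i j / aab) = a i j / aab :=
      Real.mul_self_sqrt (div_pos (hap i j) haab0).le
    set h : ℝ × ℝ → ℝ := fun q => evalP (P i j n k) q * evalP (P i j m l) q with hh
    have hcont : Continuous h := (Q8_evalP_cont _).mul (Q8_evalP_cont _)
    have e : ∀ q, evalP (E i j n k) q * evalP (E i j m l) q * CW q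
        = a i j * (h (Q8Phi q) * Q8WT (α + i.toNat) (β + j.toNat) q) := by
      intro q
      rw [hEv, hEv, hCW, ← Q8_f_WT α β hα hβ i j q]
      calc _ = (√(a i j / aab) * √(a i j / aab)) * aab *
            (h (Q8Phi q) * (evalP (Q8f i j) q ^ 2 * Q8WT α β q)) := by simp only [hh]; ring
        _ = _ := by rw [hsq, div_mul_cancel₀ _ haab0.ne']
    simp only [e]
    obtain ⟨o1, o2⟩ := Q8_OmTri _ _ (hw i j) h hcont
    rw [integral_const_mul, (Q8_OmT _ _ h o1).2, o2]
    have e2 : ∀ q : ℝ × ℝ, h (Q8Psi q) = 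
      (Q8k n k * ((p i j n).eval q.1 * (p i j k).eval q.2 + (p i j k).eval q.1 * (p i j n).eval q.2)) *
      (Q8k m l * ((p i j m).eval q.1 * (p i j l).eval q.2 + (p i j l).eval q.1 * (p i j m).eval q.2)) := by
      intro q
      simp only [hh, Q8Psi]
      rw [(hP i j n k hk).2, (hP i j m l hl).2]
    simp only [e2]
    rw [Q8_KK _ _ _ (hcp i j) (p i j) (hw i j) (hp i j) n k m l hk hl, hac i j]
    have := (hcp i j).ne'
    field_simp
    simp

end Core

/-- fully explicit orthonormal bases of `V_{2n}` and `V_{2n+1}` for the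
weight `𝒲_{α,β,-1/2}` on the square, in terms of Jacobi polynomials evaluated at
`cos(θ∓φ)`. -/
theorem stmt_8
    (α β : ℝ) (hα : -1 < α) (hβ : -1 < β)
    (cab c11 c01 c10 : ℝ)
    (hcabp : 0 < cab) (hc11p : 0 < c11) (hc01p : 0 < c01) (hc10p : 0 < c10)
    (hcab : (∫ x in Icc (-1:ℝ) 1, cab * (1 - x) ^ α * (1 + x) ^ β) = 1)
    (hc11 : (∫ x in Icc (-1:ℝ) 1, c11 * (1 - x) ^ (α+1) * (1 + x) ^ (β+1)) = 1)
    (hc01 : (∫ x in Icc (-1:ℝ) 1, c01 * (1 - x) ^ α * (1 + x) ^ (β+1)) = 1)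
    (hc10 : (∫ x in Icc (-1:ℝ) 1, c10 * (1 - x) ^ (α+1) * (1 + x) ^ β) = 1)
    (pab p11 p01 p10 : ℕ → Polynomial ℝ)
    (hpab : IsONPS (fun x => cab * (1 - x) ^ α * (1 + x) ^ β) pab)
    (hp11 : IsONPS (fun x => c11 * (1 - x) ^ (α+1) * (1 + x) ^ (β+1)) p11)
    (hp01 : IsONPS (fun x => c01 * (1 - x) ^ α * (1 + x) ^ (β+1)) p01)
    (hp10 : IsONPS (fun x => c10 * (1 - x) ^ (α+1) * (1 + x) ^ β) p10)
    (aab a11 a01 a10 : ℝ)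
    (haabp : 0 < aab) (ha11p : 0 < a11) (ha01p : 0 < a01) (ha10p : 0 < a10)
    (haab : (∫ q in omegaDom, 2 * aab * (1 - q.1 + q.2) ^ α * (1 + q.1 + q.2) ^ β
        * (q.1^2 - 4*q.2) ^ (-(1/2) : ℝ)) = 1)
    (ha11 : (∫ q in omegaDom, 2 * a11 * (1 - q.1 + q.2) ^ (α+1) * (1 + q.1 + q.2) ^ (β+1)
        * (q.1^2 - 4*q.2) ^ (-(1/2) : ℝ)) = 1)
    (ha01 : (∫ q in omegaDom, 2 * a01 * (1 - q.1 + q.2) ^ α * (1 + q.1 + q.2) ^ (β+1)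
        * (q.1^2 - 4*q.2) ^ (-(1/2) : ℝ)) = 1)
    (ha10 : (∫ q in omegaDom, 2 * a10 * (1 - q.1 + q.2) ^ (α+1) * (1 + q.1 + q.2) ^ β
        * (q.1^2 - 4*q.2) ^ (-(1/2) : ℝ)) = 1)
    (CW : ℝ × ℝ → ℝ)
    (hCW : ∀ q : ℝ × ℝ, CW q
      = 2 * aab * (4:ℝ) ^ (-(1/2) : ℝ) * |q.1 - q.2| ^ (2*α+1) * |q.1 + q.2| ^ (2*β+1)
        * (1 - q.1^2) ^ (-(1/2) : ℝ) * (1 - q.2^2) ^ (-(1/2) : ℝ)) :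
    ∀ n : ℕ,
      (∃ Q : ℕ → MvPolynomial (Fin 2) ℝ,
        (∀ k, k < n → ∀ θ φ : ℝ, θ ∈ Icc (0:ℝ) π → φ ∈ Icc (0:ℝ) π →
          evalP (Q k) (Real.cos θ, Real.cos φ)
            = (Real.sqrt 2)⁻¹
              * ((pab n).eval (Real.cos (θ - φ)) * (pab k).eval (Real.cos (θ + φ))
                + (pab k).eval (Real.cos (θ - φ)) * (pab n).eval (Real.cos (θ + φ)))) ∧
        (∀ θ φ : ℝ, θ ∈ Icc (0:ℝ) π → φ ∈ Icc (0:ℝ) π →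
          evalP (Q n) (Real.cos θ, Real.cos φ)
            = (pab n).eval (Real.cos (θ - φ)) * (pab n).eval (Real.cos (θ + φ))) ∧
        (∀ m, m + 1 < n → ∀ θ φ : ℝ, θ ∈ Icc (0:ℝ) π → φ ∈ Icc (0:ℝ) π →
          evalP (Q (n + 1 + m)) (Real.cos θ, Real.cos φ)
            = Real.sqrt (a11 / aab) * (Real.sqrt 2)⁻¹
              * (Real.cos θ ^ 2 - Real.cos φ ^ 2)
              * ((p11 (n-1)).eval (Real.cos (θ - φ)) * (p11 m).eval (Real.cos (θ + φ))
                + (p11 m).eval (Real.cos (θ - φ)) * (p11 (n-1)).eval (Real.cos (θ + φ)))) ∧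
        (1 ≤ n → ∀ θ φ : ℝ, θ ∈ Icc (0:ℝ) π → φ ∈ Icc (0:ℝ) π →
          evalP (Q (2*n)) (Real.cos θ, Real.cos φ)
            = Real.sqrt (a11 / aab) * (Real.cos θ ^ 2 - Real.cos φ ^ 2)
              * (p11 (n-1)).eval (Real.cos (θ - φ)) * (p11 (n-1)).eval (Real.cos (θ + φ))) ∧
        isONBVn sqDom CW (2*n) Q) ∧
      (∃ Q : ℕ → MvPolynomial (Fin 2) ℝ,
        (∀ k, k < n → ∀ θ φ : ℝ, θ ∈ Icc (0:ℝ) π → φ ∈ Icc (0:ℝ) π →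
          evalP (Q k) (Real.cos θ, Real.cos φ)
            = Real.sqrt (a01 / aab) * (Real.sqrt 2)⁻¹ * (Real.cos θ + Real.cos φ)
              * ((p01 n).eval (Real.cos (θ - φ)) * (p01 k).eval (Real.cos (θ + φ))
                + (p01 k).eval (Real.cos (θ - φ)) * (p01 n).eval (Real.cos (θ + φ)))) ∧
        (∀ θ φ : ℝ, θ ∈ Icc (0:ℝ) π → φ ∈ Icc (0:ℝ) π →
          evalP (Q n) (Real.cos θ, Real.cos φ)
            = Real.sqrt (a01 / aab) * (Real.cos θ + Real.cos φ)
              * (p01 n).eval (Real.cos (θ - φ)) * (p01 n).eval (Real.cos (θ + φ))) ∧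
        (∀ k, k < n → ∀ θ φ : ℝ, θ ∈ Icc (0:ℝ) π → φ ∈ Icc (0:ℝ) π →
          evalP (Q (n + 1 + k)) (Real.cos θ, Real.cos φ)
            = Real.sqrt (a10 / aab) * (Real.sqrt 2)⁻¹ * (Real.cos θ - Real.cos φ)
              * ((p10 n).eval (Real.cos (θ - φ)) * (p10 k).eval (Real.cos (θ + φ))
                + (p10 k).eval (Real.cos (θ - φ)) * (p10 n).eval (Real.cos (θ + φ)))) ∧
        (∀ θ φ : ℝ, θ ∈ Icc (0:ℝ) π → φ ∈ Icc (0:ℝ) π →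
          evalP (Q (2*n+1)) (Real.cos θ, Real.cos φ)
            = Real.sqrt (a10 / aab) * (Real.cos θ - Real.cos φ)
              * (p10 n).eval (Real.cos (θ - φ)) * (p10 n).eval (Real.cos (θ + φ))) ∧
        isONBVn sqDom CW (2*n+1) Q) := by
  have h4 : ∀ q, CW q = aab * Q8WT α β q := by
    intro q
    have h44 : (4:ℝ) ^ (-(1/2) : ℝ) = 1/2 := by
      rw [show (4:ℝ) = 2 ^ 2 by norm_num, Q8_sq_rpow _ _ (by norm_num),
        show (2 * (-(1/2)) : ℝ) = -1 by norm_num, Real.rpow_neg_one]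
      norm_num
    rw [hCW, Q8WT, h44]; ring
  let c : Bool → Bool → ℝ := fun i j => cond i (cond j c11 c10) (cond j c01 cab)
  let a : Bool → Bool → ℝ := fun i j => cond i (cond j a11 a10) (cond j a01 aab)
  let p : Bool → Bool → ℕ → Polynomial ℝ := fun i j => cond i (cond j p11 p10) (cond j p01 pab)
  obtain ⟨L, E, hL, hdeg, hev, horth⟩ := Q8_core α β hα hβ c a p
    (by rintro (_|_) (_|_) <;> assumption) (by rintro (_|_) (_|_) <;> assumption)
    (by rintro (_|_) (_|_) <;> simpa [c])
    (by rintro (_|_) (_|_) <;> simpa [c, p])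
    (by rintro (_|_) (_|_) <;> simp only [a, cond_true, cond_false, Bool.toNat_true, Bool.toNat_false, Nat.cast_zero,
        Nat.cast_one, add_zero] <;> assumption)
    CW aab rfl h4
  let Q : ℕ → ℕ → MvPolynomial (Fin 2) ℝ := fun N k =>
    if N % 2 = 0 then
      if k ≤ N / 2 then E false false (N / 2) k else E true true (N / 2 - 1) (k - N / 2 - 1)
    else
      if k ≤ N / 2 then E false true (N / 2) k else E true false (N / 2) (k - N / 2 - 1)
  have hQ0 : ∀ n k, k ≤ n → Q (2 * n) k = E false false n k := by
    intro n k hk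
    have e1 : 2 * n % 2 = 0 := by omega
    have e2 : 2 * n / 2 = n := by omega
    simp only [Q, e1, e2, if_true, if_pos hk]
  have hQ1 : ∀ n m, Q (2 * n) (n + 1 + m) = E true true (n - 1) m := by
    intro n m
    have e1 : 2 * n % 2 = 0 := by omega
    have e2 : 2 * n / 2 = n := by omega
    have e3 : ¬ (n + 1 + m ≤ n) := by omega
    have e4 : n + 1 + m - n - 1 = m := by omega
    simp only [Q, e1, e2, if_true, if_neg e3, e4]
  have hQ2 : ∀ n k, k ≤ n → Q (2 * n + 1) k = E false true n k := by
    intro n k hk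
    have e1 : ¬ ((2 * n + 1) % 2 = 0) := by omega
    have e2 : (2 * n + 1) / 2 = n := by omega
    simp only [Q, if_neg e1, e2, if_pos hk]
  have hQ3 : ∀ n m, Q (2 * n + 1) (n + 1 + m) = E true false n m := by
    intro n m
    have e1 : ¬ ((2 * n + 1) % 2 = 0) := by omega
    have e2 : (2 * n + 1) / 2 = n := by omega
    have e3 : ¬ (n + 1 + m ≤ n) := by omega
    have e4 : n + 1 + m - n - 1 = m := by omega
    simp only [Q, if_neg e1, e2, if_neg e3, e4]
  have hQdeg : ∀ N k, k ≤ N → (Q N k).totalDegree ≤ N := by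
    intro N k hk
    simp only [Q]
    split_ifs with h1 h2 h2
    · refine (hdeg _ _ _ _ h2).trans ?_
      simp only [Bool.toNat_false]; omega
    · refine (hdeg _ _ _ _ (by omega)).trans ?_
      simp only [Bool.toNat_true]; omega
    · refine (hdeg _ _ _ _ h2).trans ?_
      simp only [Bool.toNat_true, Bool.toNat_false]; omega
    · refine (hdeg _ _ _ _ (by omega)).trans ?_
      simp only [Bool.toNat_true, Bool.toNat_false]; omega
  have hQorth : ∀ N k M l, k ≤ N → l ≤ M →
      L (Q N k * Q M l) = if N = M ∧ k = l then 1 else 0 := by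
    intro N k M l hk hl
    simp only [Q]
    split_ifs <;> rw [horth _ _ _ _ _ _ _ _ (by omega) (by omega)] <;> simp <;> omega
  have honb := Q8_onb CW sqDom L hL Q hQdeg hQorth
  intro n
  refine ⟨⟨Q (2 * n), ?_, ?_, ?_, ?_, honb _⟩, ⟨Q (2 * n + 1), ?_, ?_, ?_, ?_, honb _⟩⟩
  · intro k hk θ φ _ _
    rw [hQ0 n k hk.le, hev _ _ _ _ hk.le]
    have : Q8k n k = (√2)⁻¹ := if_neg hk.ne
    simp [this, a, p, haabp.ne']
  · intro θ φ _ _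
    rw [hQ0 n n le_rfl, hev _ _ _ _ le_rfl]
    have : Q8k n n = 1/2 := if_pos rfl
    simp [this, a, p, haabp.ne']; ring
  · intro m hm θ φ _ _
    rw [hQ1, hev _ _ _ _ (by omega)]
    have : Q8k (n - 1) m = (√2)⁻¹ := if_neg (by omega)
    simp only [this, a, p, Bool.toNat_true, cond_true, pow_one]; ring
  · intro hn θ φ _ _
    have e : 2 * n = n + 1 + (n - 1) := by omega
    have e' : Q (2 * n) (2 * n) = E true true (n - 1) (n - 1) := by
      rw [← hQ1 n (n - 1), ← e]
    rw [e', hev _ _ _ _ le_rfl]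
    have : Q8k (n - 1) (n - 1) = 1/2 := if_pos rfl
    simp only [this, a, p, Bool.toNat_true, cond_true, pow_one]; ring
  · intro k hk θ φ _ _
    rw [hQ2 n k hk.le, hev _ _ _ _ hk.le]
    have : Q8k n k = (√2)⁻¹ := if_neg hk.ne
    simp only [this, a, p, Bool.toNat_true, Bool.toNat_false, cond_true, cond_false, pow_one, pow_zero]
    ring
  · intro θ φ _ _
    rw [hQ2 n n le_rfl, hev _ _ _ _ le_rfl]
    have : Q8k n n = 1/2 := if_pos rfl
    simp only [this, a, p, Bool.toNat_true, Bool.toNat_false, cond_true, cond_false, pow_one, pow_zero]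
    ring
  · intro k hk θ φ _ _
    rw [hQ3 n k, hev _ _ _ _ hk.le]
    have : Q8k n k = (√2)⁻¹ := if_neg hk.ne
    simp only [this, a, p, Bool.toNat_true, Bool.toNat_false, cond_true, cond_false, pow_one, pow_zero]
    ring
  · intro θ φ _ _
    have e : 2 * n + 1 = n + 1 + n := by omega
    have e' : Q (2 * n + 1) (2 * n + 1) = E true false n n := by
      rw [← hQ3 n n, ← e]
    rw [e', hev _ _ _ _ le_rfl]
    have : Q8k n n = 1/2 := if_pos rfl
    simp only [this, a, p, Bool.toNat_true, Bool.toNat_false, cond_true, cond_false, pow_one, pow_zero]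
    ring
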